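/- arXiv:2308.06364 — 5 statements merged into one kernel-verified Lean document; each statement's English description precedes it below -/
import Mathlib

section
/- Let N be a positive integer with base-φ representation given by the finite set S of integers (so S contains no two consecutive integers and N = Σ_{i∈S} φ^i). Assume S contains at least one positive element, and let i be the smallest positive element of S. If i is odd, then N = Σ_{k∈S, k>0} L_k + d_0 + 1. -/
/-!
Write `A'` for the sum of `φ̄ ^ k` over the positive `k ∈ S` and `B` for the sum of `φ ^ k` over the
negative `k ∈ S`. Splitting `N = ∑ φ ^ k` by the sign of `k` gives
`N = ∑_{k > 0} L_k + d_0 + (B - A')`, so the claim is `B - A' = 1`. As Lucas numbers are integers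
(`lucasR_int`), `B - A'` is an integer, and it suffices to show `0 < B - A' < 2`.

Everything rests on one estimate (`sum_phi_lt`): a sum of `φ ^ k` over a set without consecutive
integers, all below `m`, is less than `φ ^ m`. It yields `0 ≤ B < 1` and, since
`|φ̄ ^ k| = φ ^ (-k)`, also `|A'| < 1`. Finally `A' < 0`: its leading term is `-φ ^ (-i)` because `i` is
odd, and the remaining indices exceed `i + 1`, so their contribution is less than `φ ^ (-i - 1)`
in absolute value.
-/

/-- The golden ratio φ = (1+√5)/2. -/
noncomputable def goldenPhi : ℝ := (1 + Real.sqrt 5) / 2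

/-- The algebraic conjugate φ̄ = (1−√5)/2. -/
noncomputable def goldenPhiBar : ℝ := (1 - Real.sqrt 5) / 2

/-- Lucas numbers extended to all integer indices: L n = φ^n + φ̄^n. -/
noncomputable def LucasR (n : ℤ) : ℝ := goldenPhi ^ n + goldenPhiBar ^ n

lemma goldenPhi_gt_one : 1 < goldenPhi := Real.one_lt_goldenRatio

lemma goldenPhi_pos : 0 < goldenPhi := Real.goldenRatio_pos

lemma goldenPhi_sq : goldenPhi ^ 2 = goldenPhi + 1 := Real.goldenRatio_sq

lemma goldenPhiBar_sq : goldenPhiBar ^ 2 = goldenPhiBar + 1 := Real.goldenConj_sq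

lemma goldenPhiBar_eq : goldenPhiBar = -goldenPhi⁻¹ := by
  have h : goldenPhi⁻¹ = -goldenPhiBar := Real.inv_goldenRatio
  rw [h, neg_neg]

lemma abs_phiBar_zpow (k : ℤ) : |goldenPhiBar ^ k| = goldenPhi ^ (-k) := by
  rw [abs_zpow, goldenPhiBar_eq, abs_neg, abs_of_pos (inv_pos.2 goldenPhi_pos), inv_zpow, zpow_neg]

lemma lucasR_nat_int (n : ℕ) : ∃ z : ℤ, LucasR n = z := by
  induction n using Nat.twoStepInduction with
  | zero => exact ⟨2, by norm_num [LucasR]⟩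
  | one => exact ⟨1, by simp [LucasR, goldenPhi, goldenPhiBar]⟩
  | more n h1 h2 =>
    obtain ⟨a, ha⟩ := h1
    obtain ⟨b, hb⟩ := h2
    refine ⟨a + b, ?_⟩
    rw [Int.cast_add, ← ha, ← hb]
    simp only [LucasR, zpow_natCast]
    rw [pow_add _ n 2, pow_add _ n 2, goldenPhi_sq, goldenPhiBar_sq]
    ring

lemma lucasR_int (k : ℤ) (hk : 0 < k) : ∃ z : ℤ, LucasR k = z := by
  lift k to ℕ using hk.le
  exact lucasR_nat_int k

/-- By induction on the largest index `a`: the other indices are below `a - 1`, so the sum is less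
than `φ ^ a + φ ^ (a - 1) = φ ^ (a + 1)`. -/
lemma sum_phi_lt (T : Finset ℤ) (hnc : ∀ k ∈ T, k + 1 ∉ T) (m : ℤ) (hm : ∀ k ∈ T, k < m) :
    ∑ k ∈ T, goldenPhi ^ k < goldenPhi ^ m := by
  induction T using Finset.induction_on_max generalizing m with
  | empty => simpa using zpow_pos goldenPhi_pos m
  | insert a T ha ih =>
    rw [Finset.sum_insert (fun h => lt_irrefl a (ha a h))]
    have hlt : ∑ k ∈ T, goldenPhi ^ k < goldenPhi ^ (a - 1) := by
      apply ih
      · intro k hk hk'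
        exact hnc k (Finset.mem_insert_of_mem hk) (Finset.mem_insert_of_mem hk')
      · intro k hk
        have h1 := ha k hk
        have h2 : k + 1 ≠ a := fun h =>
          hnc k (Finset.mem_insert_of_mem hk) (h ▸ Finset.mem_insert_self _ _)
        omega
    have hrec : goldenPhi ^ (a + 1) = goldenPhi ^ a + goldenPhi ^ (a - 1) := by
      have h1 : goldenPhi ^ (a + 1) = goldenPhi ^ (a - 1) * goldenPhi ^ 2 := by
        rw [← zpow_natCast, ← zpow_add₀ goldenPhi_pos.ne']
        congr 1
        push_cast
        ring
      have h2 : goldenPhi ^ a = goldenPhi ^ (a - 1) * goldenPhi := by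
        rw [← zpow_add_one₀ goldenPhi_pos.ne', sub_add_cancel]
      rw [h1, h2, goldenPhi_sq]
      ring
    have hle : goldenPhi ^ (a + 1) ≤ goldenPhi ^ m :=
      zpow_le_zpow_right₀ goldenPhi_gt_one.le (hm a (Finset.mem_insert_self _ _))
    linarith

/-- The conjugate estimate, obtained from `sum_phi_lt` by negating the index set. -/
lemma abs_sum_phiBar_lt (T : Finset ℤ) (hnc : ∀ k ∈ T, k + 1 ∉ T) (m : ℤ)
    (hm : ∀ k ∈ T, m < k) : |∑ k ∈ T, goldenPhiBar ^ k| < goldenPhi ^ (-m) := by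
  refine (Finset.abs_sum_le_sum_abs _ _).trans_lt ?_
  simp only [abs_phiBar_zpow]
  have h := sum_phi_lt (T.image (fun k => -k)) (fun k hk hk' => ?_) (-m) (fun k hk => ?_)
  · rwa [Finset.sum_image (fun a _ b _ hab => neg_injective hab)] at h
  · simp only [Finset.mem_image] at hk hk'
    obtain ⟨a, ha, rfl⟩ := hk
    obtain ⟨b, hb, hab⟩ := hk'
    have : b + 1 = a := by omega
    exact hnc b hb (this ▸ ha)
  · simp only [Finset.mem_image] at hk
    obtain ⟨a, ha, rfl⟩ := hk
    have := hm a ha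
    omega

/-- Theorem 1 (odd case): if the smallest positive index `i` in the base-φ
representation `S` of `N` is odd, then `N = Σ_{k∈S, k>0} L_k + d_0 + 1`. -/
theorem stmt_0 (N : ℕ) (hN : 0 < N) (S : Finset ℤ)
    (hnc : ∀ k ∈ S, k + 1 ∉ S)
    (hrep : (N : ℝ) = ∑ k ∈ S, goldenPhi ^ k)
    (i : ℤ) (hiS : i ∈ S) (hipos : 0 < i)
    (hmin : ∀ j ∈ S, 0 < j → i ≤ j)
    (hodd : Odd i) :
    (N : ℝ) = (∑ k ∈ S.filter (fun k => 0 < k), LucasR k) +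
      (if (0 : ℤ) ∈ S then 1 else 0) + 1 := by
  set P := S.filter (fun k => 0 < k) with hP
  set M := S.filter (fun k => k < 0) with hM
  have hPnc : ∀ k ∈ P, k + 1 ∉ P := fun k hk hk' =>
    hnc k (Finset.mem_filter.1 hk).1 (Finset.mem_filter.1 hk').1
  have hMnc : ∀ k ∈ M, k + 1 ∉ M := fun k hk hk' =>
    hnc k (Finset.mem_filter.1 hk).1 (Finset.mem_filter.1 hk').1
  have hsplit : ∑ k ∈ S, goldenPhi ^ k = ∑ k ∈ P, goldenPhi ^ k +
      (if (0 : ℤ) ∈ S then 1 else 0) + ∑ k ∈ M, goldenPhi ^ k := by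
    have h0 : (if (0 : ℤ) ∈ S then (1 : ℝ) else 0) =
        ∑ k ∈ S, if k = 0 then goldenPhi ^ k else 0 := by
      rw [Finset.sum_ite_eq' S (0 : ℤ)]
      simp
    rw [h0, hP, hM, Finset.sum_filter, Finset.sum_filter, ← Finset.sum_add_distrib,
      ← Finset.sum_add_distrib]
    refine Finset.sum_congr rfl fun k _ => ?_
    rcases lt_trichotomy k 0 with h | h | h
    · simp [h, h.ne, h.not_gt]
    · simp [h]
    · simp [h, h.ne', h.not_gt]
  have hL : ∑ k ∈ P, LucasR k = ∑ k ∈ P, goldenPhi ^ k + ∑ k ∈ P, goldenPhiBar ^ k := by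
    simp only [LucasR, Finset.sum_add_distrib]
  have hLint : ∃ z : ℤ, ∑ k ∈ P, LucasR k = z := by
    refine Finset.sum_induction _ (fun x : ℝ => ∃ z : ℤ, x = z) ?_ ⟨0, by simp⟩ ?_
    · rintro _ _ ⟨a, rfl⟩ ⟨b, rfl⟩
      exact ⟨a + b, by push_cast; rfl⟩
    · intro k hk
      exact lucasR_int k (Finset.mem_filter.1 hk).2
  have hB0 : 0 ≤ ∑ k ∈ M, goldenPhi ^ k :=
    Finset.sum_nonneg fun k _ => (zpow_pos goldenPhi_pos k).le
  have hB1 : ∑ k ∈ M, goldenPhi ^ k < 1 := by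
    simpa using sum_phi_lt M hMnc 0 (fun k hk => (Finset.mem_filter.1 hk).2)
  have hA1 : -1 < ∑ k ∈ P, goldenPhiBar ^ k := by
    have h := abs_sum_phiBar_lt P hPnc 0 (fun k hk => (Finset.mem_filter.1 hk).2)
    rw [neg_zero, zpow_zero] at h
    exact (abs_lt.1 h).1
  have hA0 : ∑ k ∈ P, goldenPhiBar ^ k < 0 := by
    have hiP : i ∈ P := Finset.mem_filter.2 ⟨hiS, hipos⟩
    rw [← Finset.add_sum_erase P _ hiP]
    have h := abs_sum_phiBar_lt (P.erase i)
      (fun k hk hk' => hPnc k (Finset.mem_of_mem_erase hk) (Finset.mem_of_mem_erase hk'))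
      (i + 1) (fun k hk => by
        obtain ⟨hki, hkP⟩ := Finset.mem_erase.1 hk
        obtain ⟨hkS, hk0⟩ := Finset.mem_filter.1 hkP
        have h1 := hmin k hkS hk0
        have h2 : k ≠ i + 1 := fun h => hnc i hiS (h ▸ hkS)
        omega)
    have hlt : goldenPhi ^ (-(i + 1)) < goldenPhi ^ (-i) :=
      zpow_lt_zpow_right₀ goldenPhi_gt_one (by omega)
    have hi : goldenPhiBar ^ i = -goldenPhi ^ (-i) := by
      rw [goldenPhiBar_eq, hodd.neg_zpow, inv_zpow, zpow_neg]
    have := (abs_lt.1 h).2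
    linarith
  obtain ⟨z, hz⟩ := hLint
  obtain ⟨d, hd⟩ : ∃ d : ℤ, (if (0 : ℤ) ∈ S then (1 : ℝ) else 0) = d :=
    ⟨if (0 : ℤ) ∈ S then 1 else 0, by push_cast; rfl⟩
  rw [hsplit, hd] at hrep
  rw [hd, hz]
  rw [hz] at hL
  have h1 : ((z + d : ℤ) : ℝ) < ((N : ℤ) : ℝ) := by push_cast; linarith
  have h2 : ((N : ℤ) : ℝ) < ((z + d + 2 : ℤ) : ℝ) := by push_cast; linarith
  rw [Int.cast_lt] at h1 h2
  have h3 : (N : ℤ) = z + d + 1 := by omega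
  exact_mod_cast h3
end

section
/- Let N be a positive integer and let i_1, i_2, …, i_m be integers. If N = φ^{i_1} + φ^{i_2} + ⋯ + φ^{i_m}, then for every integer n, N·F_n = F_{n+i_1} + F_{n+i_2} + ⋯ + F_{n+i_m}. -/
/-- Fibonacci numbers extended to all integer indices: F n = (φ^n − φ̄^n)/√5. -/
noncomputable def FibR (n : ℤ) : ℝ := (goldenPhi ^ n - goldenPhiBar ^ n) / Real.sqrt 5

lemma goldenPhi_ne_zero : goldenPhi ≠ 0 := Real.goldenRatio_ne_zero

lemma goldenPhiBar_ne_zero : goldenPhiBar ≠ 0 := Real.goldenConj_ne_zero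

lemma goldenPhi_inv : goldenPhi⁻¹ = goldenPhi - 1 :=
  inv_eq_of_mul_eq_one_right (by linear_combination goldenPhi_sq)

lemma goldenPhiBar_inv : goldenPhiBar⁻¹ = goldenPhiBar - 1 :=
  inv_eq_of_mul_eq_one_right (by linear_combination goldenPhiBar_sq)

/-- `φ ^ k` and `φ̄ ^ k` have common integer coordinates with respect to the bases `1, φ` and
`1, φ̄`; negative powers are covered because `φ` is a unit of `ℤ[φ]`. -/
lemma exists_coords_zpow (k : ℤ) : ∃ a b : ℤ,
    goldenPhi ^ k = a + b * goldenPhi ∧ goldenPhiBar ^ k = a + b * goldenPhiBar := by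
  induction k using Int.induction_on with
  | zero => exact ⟨1, 0, by simp, by simp⟩
  | succ k ih =>
    obtain ⟨a, b, h₁, h₂⟩ := ih
    refine ⟨b, a + b, ?_, ?_⟩
    · rw [zpow_add_one₀ goldenPhi_ne_zero, h₁]
      push_cast
      linear_combination (b : ℝ) * goldenPhi_sq
    · rw [zpow_add_one₀ goldenPhiBar_ne_zero, h₂]
      push_cast
      linear_combination (b : ℝ) * goldenPhiBar_sq
  | pred k ih =>
    obtain ⟨a, b, h₁, h₂⟩ := ih
    refine ⟨b - a, a, ?_, ?_⟩
    · rw [zpow_sub_one₀ goldenPhi_ne_zero, h₁, goldenPhi_inv]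
      push_cast
      linear_combination (b : ℝ) * goldenPhi_sq
    · rw [zpow_sub_one₀ goldenPhiBar_ne_zero, h₂, goldenPhiBar_inv]
      push_cast
      linear_combination (b : ℝ) * goldenPhiBar_sq

/-- Algebraic conjugation of a representation of a natural number as a sum of powers of `φ`. -/
lemma sum_goldenPhiBar_zpow (N m : ℕ) (i : Fin m → ℤ)
    (h : (N : ℝ) = ∑ k, goldenPhi ^ (i k)) : (N : ℝ) = ∑ k, goldenPhiBar ^ (i k) := by
  choose a b h₁ h₂ using fun k => exists_coords_zpow (i k)
  simp only [h₁, Finset.sum_add_distrib, ← Finset.sum_mul] at h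
  simp only [h₂, Finset.sum_add_distrib, ← Finset.sum_mul]
  have hb : ∑ k, b k = 0 := by
    by_contra hne
    have hirr : Irrational (((∑ k, b k : ℤ) : ℝ) * goldenPhi) :=
      Real.goldenRatio_irrational.intCast_mul hne
    apply hirr.ne_int (N - ∑ k, a k)
    push_cast
    linarith
  have hb' : ∑ k, (b k : ℝ) = 0 := by exact_mod_cast hb
  rw [hb'] at h ⊢
  simpa using h

/-- If `N = φ^{i_1} + ⋯ + φ^{i_m}`, then `N·F_n = F_{n+i_1} + ⋯ + F_{n+i_m}`
for every integer `n`. -/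
theorem stmt_4 (N : ℕ) (hN : 0 < N) (m : ℕ) (i : Fin m → ℤ)
    (h : (N : ℝ) = ∑ k, goldenPhi ^ (i k)) :
    ∀ n : ℤ, (N : ℝ) * FibR n = ∑ k, FibR (n + i k) := by
  intro n
  have h' := sum_goldenPhiBar_zpow N m i h
  simp only [FibR, zpow_add₀ goldenPhi_ne_zero, zpow_add₀ goldenPhiBar_ne_zero]
  rw [← Finset.sum_div, Finset.sum_sub_distrib, ← Finset.mul_sum, ← Finset.mul_sum, ← h, ← h']
  ring
end

section
/- Let N be a positive integer and let i_1, i_2, …, i_m be integers. If for every integer n one has N·F_n = F_{n+i_1} + F_{n+i_2} + ⋯ + F_{n+i_m}, then N = φ^{i_1} + φ^{i_2} + ⋯ + φ^{i_m}. -/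
theorem fibR_succ_sub (j : ℤ) : FibR (1 + j) - goldenPhiBar * FibR j = goldenPhi ^ j := by
  have h5 : Real.sqrt 5 ≠ 0 := by positivity
  have hφ : goldenPhi ≠ 0 := Real.goldenRatio_ne_zero
  have hψ : goldenPhiBar ≠ 0 := Real.goldenConj_ne_zero
  have hd : goldenPhi - goldenPhiBar = Real.sqrt 5 := Real.goldenRatio_sub_goldenConj
  unfold FibR
  rw [zpow_one_add₀ hφ, zpow_one_add₀ hψ]
  field_simp
  rw [← hd]
  ring

/-- If `N·F_n = F_{n+i_1} + ⋯ + F_{n+i_m}` for every integer `n`, then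
`N = φ^{i_1} + ⋯ + φ^{i_m}`. -/
theorem stmt_6 (N : ℕ) (hN : 0 < N) (m : ℕ) (i : Fin m → ℤ)
    (h : ∀ n : ℤ, (N : ℝ) * FibR n = ∑ k, FibR (n + i k)) :
    (N : ℝ) = ∑ k, goldenPhi ^ (i k) := by
  calc
    (N : ℝ) = N * (FibR (1 + 0) - goldenPhiBar * FibR 0) := by
      rw [fibR_succ_sub, zpow_zero, mul_one]
    _ = N * FibR 1 - goldenPhiBar * (N * FibR 0) := by
      rw [add_zero]
      ring
    _ = ∑ k, (FibR (1 + i k) - goldenPhiBar * FibR (i k)) := by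
      rw [h 1, h 0, Finset.mul_sum, Finset.sum_sub_distrib]
      simp only [zero_add]
    _ = ∑ k, goldenPhi ^ (i k) := by
      simp only [fibR_succ_sub]
end

section
/- Let N be a positive integer and let i_1, i_2, …, i_m be integers. If for every integer n one has N·L_n = L_{n+i_1} + L_{n+i_2} + ⋯ + L_{n+i_m}, then N = φ^{i_1} + φ^{i_2} + ⋯ + φ^{i_m}. -/
/-- If `N·L_n = L_{n+i_1} + ⋯ + L_{n+i_m}` for every integer `n`, then
`N = φ^{i_1} + ⋯ + φ^{i_m}`. -/
theorem stmt_7 (N : ℕ) (hN : 0 < N) (m : ℕ) (i : Fin m → ℤ)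
    (h : ∀ n : ℤ, (N : ℝ) * LucasR n = ∑ k, LucasR (n + i k)) :
    (N : ℝ) = ∑ k, goldenPhi ^ (i k) := by
  have h5 : 0 < Real.sqrt 5 := Real.sqrt_pos.mpr (by norm_num)
  have hsq : Real.sqrt 5 * Real.sqrt 5 = 5 := Real.mul_self_sqrt (by norm_num)
  have hphi : goldenPhi ≠ 0 := by
    unfold goldenPhi
    positivity
  have hbar : goldenPhiBar ≠ 0 := by
    unfold goldenPhiBar
    intro h0
    nlinarith
  have h0 := h 0
  have h1 := h 1
  simp only [LucasR, zpow_add₀ hphi, zpow_add₀ hbar, zpow_zero, zpow_one, one_mul,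
    Finset.sum_add_distrib, ← Finset.mul_sum] at h0 h1
  have hdiff : goldenPhi - goldenPhiBar ≠ 0 := by
    have : goldenPhi - goldenPhiBar = Real.sqrt 5 := by
      unfold goldenPhi goldenPhiBar
      ring
    rw [this]
    exact h5.ne'
  apply mul_left_cancel₀ hdiff
  linear_combination h1 - goldenPhiBar * h0
end

section
/- Let k_1 > k_2 > ⋯ > k_s be integers (s ≥ 1) such that the gap between every two consecutive terms is at least 2, that is, k_j − k_{j+1} ≥ 2 for all 1 ≤ j ≤ s−1. Then φ^{k_1} + φ^{k_2} + ⋯ + φ^{k_s} < φ^{k_1 + 1}. -/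
lemma goldenPhi_zpow_add_one (n : ℤ) :
    goldenPhi ^ (n + 1) = goldenPhi ^ n + goldenPhi ^ (n - 1) := by
  have h0 : goldenPhi ≠ 0 := Real.goldenRatio_ne_zero
  have hsq : goldenPhi ^ 2 = goldenPhi + 1 := Real.goldenRatio_sq
  rw [zpow_add_one₀ h0, zpow_sub_one₀ h0]
  field_simp
  exact hsq

/-- Lemma 1: for integers `k 0 > k 1 > ⋯ > k (s-1)` with consecutive gaps at
least 2, we have `φ^{k_1} + ⋯ + φ^{k_s} < φ^{k_1 + 1}`. -/
theorem stmt_8 (s : ℕ) (hs : 1 ≤ s) (k : ℕ → ℤ)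
    (hgap : ∀ j, j + 1 < s → k j - k (j + 1) ≥ 2) :
    ∑ j ∈ Finset.range s, goldenPhi ^ (k j) < goldenPhi ^ (k 0 + 1) := by
  have h1 : 1 < goldenPhi := Real.one_lt_goldenRatio
  induction s, hs using Nat.le_induction generalizing k with
  | base =>
    rw [Finset.sum_range_one]
    exact zpow_lt_zpow_right₀ h1 (lt_add_one (k 0))
  | succ n hn ih =>
    have htail := ih (fun j => k (j + 1)) fun j hj => hgap (j + 1) (by omega)
    have hgap0 := hgap 0 (by omega)
    have hle : goldenPhi ^ (k (0 + 1) + 1) ≤ goldenPhi ^ (k 0 - 1) :=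
      zpow_le_zpow_right₀ h1.le (by omega)
    rw [Finset.sum_range_succ', goldenPhi_zpow_add_one]
    linarith
end
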